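/- Let β > 0 and let m ≥ 1 be an integer. For every ε > 0 and every γ > 0 there exists an integer n* such that for all n ≥ n*, the random variable D = Σ_{i=1}^{n} binom(d(u_i), 2) of the Móri graph G^n_{m,β} satisfies P(|D − E[D]| ≥ n^{(4+β)/(4+2β)+ε}) ≤ 1/n^{γ}. -/

import Mathlib

open Finset

/-- A parent sequence of length `N`: for each `t ∈ {2,…,N}` an index `f t ∈ {1,…,t-1}`. -/
def ParentSeq (N : ℕ) : Type :=
  ∀ t : Set.Icc 2 N, Set.Icc 1 ((t : ℕ) - 1)

noncomputable instance (N : ℕ) : Fintype (ParentSeq N) := by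
  unfold ParentSeq
  classical
  infer_instance

/-- The value of a parent sequence at `j` (junk value `0` outside `{2,…,N}`). -/
def pval {N : ℕ} (f : ParentSeq N) (j : ℕ) : ℕ :=
  if h : 2 ≤ j ∧ j ≤ N then (f ⟨j, Set.mem_Icc.mpr h⟩ : ℕ) else 0

/-- The degree `d_t(v_i)` of vertex `i` at time `t` in the tree determined by `f`. -/
def deg {N : ℕ} (f : ParentSeq N) (t i : ℕ) : ℕ :=
  ((Finset.Icc 2 t).filter (fun j => pval f j = i)).card + (if 2 ≤ i then 1 else 0)

/-- The Móri probability of the parent sequence `f`. -/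
noncomputable def moriP {N : ℕ} (β : ℝ) (f : ParentSeq N) : ℝ :=
  ∏ t ∈ Finset.Icc 2 N, ((deg f (t - 1) (pval f t) : ℝ) + β) / ((2 + β) * ((t : ℝ) - 1) - 2)

/-- Expectation of `X` under the Móri measure on parent sequences of length `N`. -/
noncomputable def moriE (N : ℕ) (β : ℝ) (X : ParentSeq N → ℝ) : ℝ :=
  ∑ f : ParentSeq N, moriP β f * X f

open Classical in
/-- Probability of an event under the Móri measure on parent sequences of length `N`. -/
noncomputable def moriPr (N : ℕ) (β : ℝ) (p : ParentSeq N → Prop) : ℝ :=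
  ∑ f : ParentSeq N, if p f then moriP β f else 0

/-- The index of the merged vertex containing tree vertex `t` when merging in blocks of `m`. -/
def blk (m t : ℕ) : ℕ := (t - 1) / m + 1

/-- The number `m(a,b)` of edges joining `u_a` and `u_b` in the Móri graph `G^n_{m,β}`. -/
def mult (n m : ℕ) (f : ParentSeq (n * m)) (a b : ℕ) : ℕ :=
  ((Finset.Icc 2 (n * m)).filter (fun t =>
    (blk m t = a ∧ blk m (pval f t) = b) ∨ (blk m t = b ∧ blk m (pval f t) = a))).card

/-- The degree `d(u_i)` of the merged vertex `u_i` in the Móri graph `G^n_{m,β}`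
(a loop contributes `2`). -/
def degU (n m : ℕ) (f : ParentSeq (n * m)) (i : ℕ) : ℕ :=
  ((Finset.Icc 2 (n * m)).filter (fun t => blk m t = i)).card +
  ((Finset.Icc 2 (n * m)).filter (fun t => blk m (pval f t) = i)).card

/-! ### analytic lemmas -/

lemma taylor_aux (n : ℕ) (x y : ℝ) :
    |(x + y) ^ (n + 2) - x ^ (n + 2) - (n + 2) * x ^ (n + 1) * y|
      ≤ ((n : ℝ) + 2) ^ 2 * (y ^ 2 * (|x| + |y|) ^ n) := by
  induction n with
  | zero =>
    have : (x + y) ^ (0 + 2) - x ^ (0 + 2) - ((0 : ℕ) + 2) * x ^ (0 + 1) * y = y ^ 2 := by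
      push_cast; ring
    rw [this, abs_of_nonneg (sq_nonneg y)]
    norm_num
    nlinarith [sq_nonneg y]
  | succ n ih =>
    have e : (x + y) ^ (n + 1 + 2) - x ^ (n + 1 + 2) - ((n + 1 : ℕ) + 2) * x ^ (n + 1 + 1) * y
        = (x + y) * ((x + y) ^ (n + 2) - x ^ (n + 2) - (n + 2) * x ^ (n + 1) * y)
          + (n + 2) * (x ^ (n + 1) * y ^ 2) := by
      push_cast; ring
    rw [e]
    set s := |x| + |y| with hs
    have hx : |x| ≤ s := by rw [hs]; linarith [abs_nonneg y]
    have hs0 : 0 ≤ s := le_trans (abs_nonneg x) hx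
    have h1 : |x + y| ≤ s := abs_add_le x y
    have h2 : |x ^ (n + 1) * y ^ 2| ≤ y ^ 2 * s ^ (n + 1) := by
      rw [abs_mul, abs_pow, abs_of_nonneg (sq_nonneg y), mul_comm]
      gcongr
    have h3 : 0 ≤ y ^ 2 * s ^ (n + 1) := by positivity
    calc _ ≤ |x + y| * |(x + y) ^ (n + 2) - x ^ (n + 2) - (n + 2) * x ^ (n + 1) * y|
          + (n + 2) * |x ^ (n + 1) * y ^ 2| := by
            refine (abs_add_le _ _).trans ?_
            rw [abs_mul, abs_mul, abs_of_nonneg (by positivity : (0:ℝ) ≤ n + 2)]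
      _ ≤ s * (((n : ℝ) + 2) ^ 2 * (y ^ 2 * s ^ n)) + (n + 2) * (y ^ 2 * s ^ (n + 1)) := by
            gcongr
      _ = (((n : ℝ) + 2) ^ 2 + (n + 2)) * (y ^ 2 * s ^ (n + 1)) := by ring
      _ ≤ _ := by
            gcongr
            push_cast
            nlinarith [(Nat.cast_nonneg n : (0:ℝ) ≤ n)]

lemma pow_ineq (n : ℕ) : ∃ K : ℝ, 0 < K ∧ ∀ x y δ : ℝ, 0 < δ → δ ≤ 1 →
    (x + y) ^ (2 * n + 2) ≤ x ^ (2 * n + 2) + (2 * n + 2) * x ^ (2 * n + 1) * y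
      + K * (δ * x ^ (2 * n + 2) + (δ⁻¹) ^ n * y ^ (2 * n + 2)) := by
  refine ⟨((2 * n : ℕ) + 2) ^ 2 * 4 ^ n, by positivity, ?_⟩
  intro x y δ hδ hδ1
  have h := le_of_abs_le (taylor_aux (2 * n) x y)
  have hxx : 0 ≤ x ^ (2 * n + 2) := by
    rw [show 2 * n + 2 = 2 * (n + 1) by ring, pow_mul]; positivity
  have hyy : 0 ≤ y ^ (2 * n + 2) := by
    rw [show 2 * n + 2 = 2 * (n + 1) by ring, pow_mul]; positivity
  have key : y ^ 2 * (|x| + |y|) ^ (2 * n)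
      ≤ 4 ^ n * (δ * x ^ (2 * n + 2) + (δ⁻¹) ^ n * y ^ (2 * n + 2)) := by
    have h0 : (|x| + |y|) ^ 2 ≤ 2 * x ^ 2 + 2 * y ^ 2 := by
      have := sq_abs x
      have := sq_abs y
      nlinarith [sq_nonneg (|x| - |y|)]
    rw [pow_mul]
    rcases le_total (y ^ 2) (δ * x ^ 2) with hc | hc
    · have h1 : (|x| + |y|) ^ 2 ≤ 4 * x ^ 2 := by nlinarith [sq_nonneg x]
      calc _ ≤ (δ * x ^ 2) * (4 * x ^ 2) ^ n := by gcongr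
        _ = 4 ^ n * (δ * x ^ (2 * n + 2)) := by rw [mul_pow, ← pow_mul]; ring
        _ ≤ _ := by
          gcongr
          have : 0 ≤ (δ⁻¹) ^ n * y ^ (2 * n + 2) := by positivity
          linarith
    · have h1 : (|x| + |y|) ^ 2 ≤ 4 * (δ⁻¹ * y ^ 2) := by
        have a1 : x ^ 2 ≤ δ⁻¹ * y ^ 2 := by
          rw [inv_mul_eq_div, le_div_iff₀ hδ]; linarith
        have a2 : y ^ 2 ≤ δ⁻¹ * y ^ 2 := by
          have : 1 ≤ δ⁻¹ := (one_le_inv₀ hδ).2 hδ1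
          nlinarith [sq_nonneg y]
        linarith
      calc _ ≤ y ^ 2 * (4 * (δ⁻¹ * y ^ 2)) ^ n := by gcongr
        _ = 4 ^ n * ((δ⁻¹) ^ n * y ^ (2 * n + 2)) := by rw [mul_pow, mul_pow, ← pow_mul]; ring
        _ ≤ _ := by
          gcongr
          have : 0 ≤ δ * x ^ (2 * n + 2) := by positivity
          linarith
  push_cast at h key ⊢
  have : (2 * (n:ℝ) + 2) ^ 2 * (y ^ 2 * (|x| + |y|) ^ (2 * n)) ≤ (2 * (n:ℝ) + 2) ^ 2 *
    (4 ^ n * (δ * x ^ (2 * n + 2) + (δ⁻¹) ^ n * y ^ (2 * n + 2))) := by gcongr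
  linarith

lemma rec_bound (u : ℕ → ℝ) (ρ : ℕ → ℝ) (a b B : ℝ) (hab : a < b) (hb : 1 ≤ b) (ha : 0 ≤ a)
    (hu : ∀ N, 1 ≤ N → 0 ≤ u N)
    (hρ : ∀ᶠ N : ℕ in Filter.atTop, ρ N ≤ Real.exp (a / N))
    (hrec : ∀ N : ℕ, 1 ≤ N → u (N + 1) ≤ ρ N * u N + B * (N : ℝ) ^ (b - 1)) :
    ∃ C : ℝ, 0 < C ∧ ∀ N : ℕ, 1 ≤ N → u N ≤ C * (N : ℝ) ^ b := by
  set a' := (a + b) / 2 with ha'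
  have h1 : a < a' := by rw [ha']; linarith
  have h2 : a' < b := by rw [ha']; linarith
  obtain ⟨N1, hN1⟩ := Filter.eventually_atTop.1 hρ
  obtain ⟨N2, hN2⟩ := exists_nat_gt (max a (a ^ 2 / (a' - a)))
  set N0 := max (max N1 N2) 1 with hN0
  have hN0' : 1 ≤ N0 := le_max_right _ _
  set C := (∑ N ∈ Finset.Icc 1 N0, u N) + |B| / (b - a') + 1 with hC
  have hsum : 0 ≤ ∑ N ∈ Finset.Icc 1 N0, u N :=
    Finset.sum_nonneg fun i hi => hu i (Finset.mem_Icc.1 hi).1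
  have hBd : 0 ≤ |B| / (b - a') := div_nonneg (abs_nonneg _) (by linarith)
  have hCpos : 0 < C := by rw [hC]; linarith
  refine ⟨C, hCpos, ?_⟩
  have small : ∀ N, 1 ≤ N → N ≤ N0 → u N ≤ C * (N : ℝ) ^ b := by
    intro N hN hNN
    have e1 : u N ≤ ∑ N ∈ Finset.Icc 1 N0, u N :=
      Finset.single_le_sum (f := u) (fun i hi => hu i (Finset.mem_Icc.1 hi).1)
        (Finset.mem_Icc.2 ⟨hN, hNN⟩)
    have e2 : (1 : ℝ) ≤ (N : ℝ) ^ b :=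
      Real.one_le_rpow (by exact_mod_cast hN) (by linarith)
    nlinarith
  intro N hN
  rcases le_total N N0 with h | h
  · exact small N hN h
  · induction N, h using Nat.le_induction with
    | base => exact small _ hN le_rfl
    | succ N hNN ih =>
      have hN1' : 1 ≤ N := hN0'.trans hNN
      have ih := ih hN1'
      have hNpos : (0 : ℝ) < N := by exact_mod_cast hN1'
      have hr := hN1 N ((le_max_left _ _).trans ((le_max_left _ _).trans hNN))
      have hN2N : (N2 : ℝ) ≤ N := by
        exact_mod_cast (le_max_right N1 N2).trans ((le_max_left _ _).trans hNN)
      have g1 : a < N := lt_of_lt_of_le ((le_max_left _ _).trans_lt hN2) hN2N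
      have g2 : a ^ 2 / (a' - a) < N := lt_of_lt_of_le ((le_max_right _ _).trans_lt hN2) hN2N
      have g3 : Real.exp (a / N) ≤ 1 + a' / N := by
        have hx0 : 0 ≤ a / N := by positivity
        have hx1 : |a / (N : ℝ)| ≤ 1 := by
          rw [abs_of_nonneg hx0, div_le_one hNpos]; exact g1.le
        have := le_of_abs_le (Real.abs_exp_sub_one_sub_id_le hx1)
        have h4 : (a / N) ^ 2 ≤ (a' - a) / N := by
          rw [div_pow, div_le_div_iff₀ (by positivity) hNpos]
          rw [div_lt_iff₀ (by linarith)] at g2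
          nlinarith
        have : a' / N = a / N + (a' - a) / N := by ring
        linarith
      have hpow : (N : ℝ) ^ b = N * (N : ℝ) ^ (b - 1) := by
        rw [Real.rpow_sub_one hNpos.ne']; field_simp
      have hP : 0 < (N : ℝ) ^ (b - 1) := Real.rpow_pos_of_pos hNpos _
      have bern : (N : ℝ) ^ b + b * (N : ℝ) ^ (b - 1) ≤ ((N + 1 : ℕ) : ℝ) ^ b := by
        have := one_add_mul_self_le_rpow_one_add (s := 1 / (N : ℝ)) (by
          have : 0 < 1 / (N : ℝ) := by positivity
          linarith) hb
        have e : ((N + 1 : ℕ) : ℝ) = N * (1 + 1 / N) := by push_cast; field_simp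
        rw [e, Real.mul_rpow hNpos.le (by positivity)]
        calc _ = (N : ℝ) ^ b * (1 + b * (1 / N)) := by rw [hpow]; field_simp
          _ ≤ _ := by gcongr
      have hB : B ≤ C * (b - a') := by
        have : |B| / (b - a') ≤ C := by rw [hC]; linarith
        rw [div_le_iff₀ (by linarith)] at this
        exact (le_abs_self B).trans this
      calc u (N + 1) ≤ ρ N * u N + B * (N : ℝ) ^ (b - 1) := hrec N hN1'
        _ ≤ (1 + a' / N) * (C * (N : ℝ) ^ b) + (C * (b - a')) * (N : ℝ) ^ (b - 1) := by
          have := hu N hN1'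
          have h5 : ρ N * u N ≤ (1 + a' / N) * u N := by
            gcongr; exact hr.trans g3
          have h6 : (1 + a' / N) * u N ≤ (1 + a' / N) * (C * (N : ℝ) ^ b) := by
            have : 0 ≤ a' / N := div_nonneg (by linarith) hNpos.le
            gcongr
          have h7 : B * (N : ℝ) ^ (b - 1) ≤ (C * (b - a')) * (N : ℝ) ^ (b - 1) := by gcongr
          linarith
        _ = C * ((N : ℝ) ^ b + b * (N : ℝ) ^ (b - 1)) := by rw [hpow]; field_simp; ring
        _ ≤ _ := by gcongr

/-! ### one-step recursion -/

noncomputable def wt {N : ℕ} (β : ℝ) (f : ParentSeq N) (i : ℕ) : ℝ := (deg f N i : ℝ) + β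

noncomputable def WW (β : ℝ) (N : ℕ) : ℝ := (2 + β) * (N : ℝ) - 2

noncomputable def upd (N : ℕ) (β : ℝ) (w : ℕ → ℝ) (p : ℕ) : ℕ → ℝ :=
  fun i => if i = N + 1 then 1 + β else w i + if i = p then 1 else 0

def ext1 {N : ℕ} (f : ParentSeq N) (p : Set.Icc 1 N) : ParentSeq (N + 1) :=
  fun t => if h : (t : ℕ) ≤ N then f ⟨t, Set.mem_Icc.mpr ⟨(Set.mem_Icc.mp t.2).1, h⟩⟩
    else ⟨p, Set.mem_Icc.mpr ⟨(Set.mem_Icc.mp p.2).1, by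
      have := (Set.mem_Icc.mp p.2).2
      omega⟩⟩

lemma pval_ext_le {N : ℕ} (f : ParentSeq N) (p : Set.Icc 1 N) (j : ℕ) (hj : j ≤ N) :
    pval (ext1 f p) j = pval f j := by
  unfold pval
  by_cases h : 2 ≤ j
  · rw [dif_pos ⟨h, by omega⟩, dif_pos ⟨h, hj⟩]
    simp [ext1, hj]
  · rw [dif_neg (by omega), dif_neg (by omega)]

lemma pval_ext_last {N : ℕ} (hN : 1 ≤ N) (f : ParentSeq N) (p : Set.Icc 1 N) :
    pval (ext1 f p) (N + 1) = p := by
  unfold pval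
  rw [dif_pos ⟨by omega, le_rfl⟩]
  simp [ext1]

lemma pval_mem {N : ℕ} (f : ParentSeq N) (j : ℕ) (h : j ∈ Finset.Icc 2 N) :
    pval f j ∈ Finset.Icc 1 N := by
  rw [Finset.mem_Icc] at h
  unfold pval
  rw [dif_pos h]
  have := (f ⟨j, Set.mem_Icc.mpr h⟩).2
  rw [Set.mem_Icc] at this
  rw [Finset.mem_Icc]
  simp only at this
  omega

lemma deg_ext_le {N : ℕ} (f : ParentSeq N) (p : Set.Icc 1 N) (t i : ℕ) (ht : t ≤ N) :
    deg (ext1 f p) t i = deg f t i := by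
  unfold deg
  congr 2
  apply Finset.filter_congr
  intro j hj
  rw [pval_ext_le f p j ((Finset.mem_Icc.1 hj).2.trans ht)]

lemma wt_ext {N : ℕ} (hN : 1 ≤ N) (β : ℝ) (f : ParentSeq N) (p : Set.Icc 1 N) :
    wt β (ext1 f p) = upd N β (wt β f) p := by
  funext i
  unfold wt upd
  have e : Finset.Icc 2 (N + 1) = insert (N + 1) (Finset.Icc 2 N) := by
    ext j; simp only [Finset.mem_Icc, Finset.mem_insert]; omega
  have hfil : (Finset.Icc 2 N).filter (fun j => pval (ext1 f p) j = i)
      = (Finset.Icc 2 N).filter (fun j => pval f j = i) := by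
    apply Finset.filter_congr
    intro j hj
    rw [pval_ext_le f p j (Finset.mem_Icc.1 hj).2]
  have hp := Set.mem_Icc.1 p.2
  split_ifs with h1 h2
  · subst h1
    have : (Finset.Icc 2 (N + 1)).filter (fun j => pval (ext1 f p) j = N + 1) = ∅ := by
      rw [e, Finset.filter_insert, hfil, pval_ext_last hN, if_neg (by omega)]
      apply Finset.filter_eq_empty_iff.2
      intro j hj
      have := Finset.mem_Icc.1 (pval_mem f j hj)
      omega
    unfold deg
    rw [this, if_pos (by omega)]
    simp
  · unfold deg
    rw [e, Finset.filter_insert, hfil, pval_ext_last hN, if_pos h2.symm,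
      Finset.card_insert_of_notMem (by simp)]
    push_cast; ring
  · unfold deg
    rw [e, Finset.filter_insert, hfil, pval_ext_last hN, if_neg (fun h => h2 h.symm)]
    ring

lemma moriP_ext {N : ℕ} (hN : 1 ≤ N) (β : ℝ) (f : ParentSeq N) (p : Set.Icc 1 N) :
    moriP β (ext1 f p) = moriP β f * (wt β f p / WW β N) := by
  unfold moriP
  rw [Finset.prod_Icc_succ_top (by omega)]
  congr 1
  · apply Finset.prod_congr rfl
    intro t ht
    have ht := Finset.mem_Icc.1 ht
    rw [pval_ext_le f p t ht.2, deg_ext_le f p _ _ (by omega)]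
  · rw [pval_ext_last hN, Nat.add_sub_cancel, deg_ext_le f p _ _ le_rfl]
    unfold wt WW
    push_cast
    ring_nf

def extEquiv (N : ℕ) (hN : 1 ≤ N) : ParentSeq N × Set.Icc 1 N ≃ ParentSeq (N + 1) where
  toFun x := ext1 x.1 x.2
  invFun g := (fun t => g ⟨t, Set.mem_Icc.mpr ⟨(Set.mem_Icc.mp t.2).1,
      ((Set.mem_Icc.mp t.2).2).trans (Nat.le_succ N)⟩⟩,
    ⟨g ⟨N + 1, Set.mem_Icc.mpr ⟨by omega, le_rfl⟩⟩, by
      have := (g ⟨N + 1, Set.mem_Icc.mpr ⟨by omega, le_rfl⟩⟩).2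
      simpa using this⟩)
  left_inv := by
    rintro ⟨f, p⟩
    apply Prod.ext
    · funext t
      have := (Set.mem_Icc.mp t.2).2
      simp [ext1, this]
    · apply Subtype.ext
      simp [ext1]
  right_inv := by
    intro g
    funext t
    by_cases h : (t : ℕ) ≤ N
    · simp [ext1, h]
    · obtain ⟨t, ht⟩ := t
      have ht2 := (Set.mem_Icc.mp ht).2
      simp only at h
      have ht : t = N + 1 := by omega
      subst ht
      apply Subtype.ext
      simp [ext1]

lemma moriE_succ {N : ℕ} (hN : 1 ≤ N) (β : ℝ) (F : (ℕ → ℝ) → ℝ) :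
    moriE (N + 1) β (fun g => F (wt β g)) = moriE N β (fun f =>
      ∑ p ∈ Finset.Icc 1 N, wt β f p / WW β N * F (upd N β (wt β f) p)) := by
  unfold moriE
  rw [← (extEquiv N hN).sum_comp, Fintype.sum_prod_type]
  apply Finset.sum_congr rfl
  intro f _
  rw [Finset.mul_sum, Finset.sum_subtype (p := fun x => x ∈ Set.Icc 1 N) (Finset.Icc 1 N)
    (fun x => by simp)]
  apply Finset.sum_congr rfl
  intro p _
  change moriP β (ext1 f p) * F (wt β (ext1 f p)) = _
  rw [moriP_ext hN, wt_ext hN]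
  ring

def Good (β : ℝ) (N : ℕ) (w : ℕ → ℝ) : Prop :=
  (∀ i, 0 ≤ w i) ∧ ∑ p ∈ Finset.Icc 1 N, w p = WW β N

lemma WW_pos {β : ℝ} (hβ : 0 < β) {N : ℕ} (hN : 1 ≤ N) : 0 < WW β N := by
  unfold WW
  have : (1 : ℝ) ≤ N := by exact_mod_cast hN
  nlinarith

lemma good_wt {β : ℝ} (hβ : 0 < β) {N : ℕ} (hN : 1 ≤ N) (f : ParentSeq N) :
    Good β N (wt β f) := by
  refine ⟨fun i => by unfold wt; positivity, ?_⟩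
  unfold wt deg
  push_cast
  rw [Finset.sum_add_distrib, Finset.sum_add_distrib]
  have h1 := Finset.card_eq_sum_card_fiberwise (s := Finset.Icc 2 N) (t := Finset.Icc 1 N)
    (f := fun j => pval f j) (fun j hj => pval_mem f j hj)
  have h2 : ∑ x ∈ Finset.Icc 1 N, (if 2 ≤ x then (1 : ℝ) else 0) = (Finset.Icc 2 N).card := by
    rw [← Finset.sum_filter, Finset.sum_const, nsmul_eq_mul, mul_one]
    congr 2
    ext j; simp only [Finset.mem_filter, Finset.mem_Icc]; omega
  rw [h2, ← Nat.cast_sum, ← h1]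
  simp only [Nat.card_Icc, Finset.sum_const, nsmul_eq_mul]
  unfold WW
  obtain ⟨M, rfl⟩ : ∃ M, N = M + 1 := ⟨N - 1, by omega⟩
  have : M + 1 + 1 - 2 = M := by omega
  rw [this, Nat.add_sub_cancel]
  push_cast
  ring

lemma WW_nonneg_step {β : ℝ} (hβ : 0 < β) {N : ℕ} (f : ParentSeq N) : 0 ≤ moriP β f := by
  unfold moriP
  apply Finset.prod_nonneg
  intro t ht
  have ht : 2 ≤ t := (Finset.mem_Icc.1 ht).1
  have h2 : (2 : ℝ) ≤ t := by exact_mod_cast ht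
  apply div_nonneg (by positivity)
  nlinarith

/-- expectation of a functional of weights -/
noncomputable def EE (β : ℝ) (N : ℕ) (F : (ℕ → ℝ) → ℝ) : ℝ :=
  moriE N β (fun f => F (wt β f))

lemma EE_mono {β : ℝ} (hβ : 0 < β) {N : ℕ} (hN : 1 ≤ N) {F G : (ℕ → ℝ) → ℝ}
    (h : ∀ w, Good β N w → F w ≤ G w) : EE β N F ≤ EE β N G := by
  unfold EE moriE
  apply Finset.sum_le_sum
  intro f _
  exact mul_le_mul_of_nonneg_left (h _ (good_wt hβ hN f)) (WW_nonneg_step hβ f)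

lemma EE_congr {β : ℝ} (hβ : 0 < β) {N : ℕ} (hN : 1 ≤ N) {F G : (ℕ → ℝ) → ℝ}
    (h : ∀ w, Good β N w → F w = G w) : EE β N F = EE β N G :=
  le_antisymm (EE_mono hβ hN fun w hw => (h w hw).le) (EE_mono hβ hN fun w hw => (h w hw).ge)

lemma EE_add (β : ℝ) (N : ℕ) (F G : (ℕ → ℝ) → ℝ) :
    EE β N (fun w => F w + G w) = EE β N F + EE β N G := by
  unfold EE moriE
  rw [← Finset.sum_add_distrib]
  exact Finset.sum_congr rfl fun f _ => by ring

lemma EE_smul (β : ℝ) (N : ℕ) (c : ℝ) (F : (ℕ → ℝ) → ℝ) :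
    EE β N (fun w => c * F w) = c * EE β N F := by
  unfold EE moriE
  rw [Finset.mul_sum]
  exact Finset.sum_congr rfl fun f _ => by ring

lemma EE_succ {N : ℕ} (hN : 1 ≤ N) (β : ℝ) (F : (ℕ → ℝ) → ℝ) :
    EE β (N + 1) F = EE β N (fun w =>
      ∑ p ∈ Finset.Icc 1 N, w p / WW β N * F (upd N β w p)) := moriE_succ hN β F

lemma Good.sum_div {β : ℝ} (hβ : 0 < β) {N : ℕ} (hN : 1 ≤ N) {w : ℕ → ℝ} (h : Good β N w) :
    ∑ p ∈ Finset.Icc 1 N, w p / WW β N = 1 := by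
  rw [← Finset.sum_div, h.2, div_self (WW_pos hβ hN).ne']

lemma EE_const {β : ℝ} (hβ : 0 < β) {N : ℕ} (hN : 1 ≤ N) (c : ℝ) :
    EE β N (fun _ => c) = c := by
  induction N, hN using Nat.le_induction with
  | base =>
    unfold EE moriE
    have : IsEmpty (Set.Icc 2 1) := ⟨fun t => by have := Set.mem_Icc.1 t.2; omega⟩
    have : Unique (ParentSeq 1) :=
      { default := fun t => isEmptyElim t
        uniq := fun g => by funext t; exact isEmptyElim t }
    rw [Fintype.sum_unique]
    unfold moriP
    simp
  | succ N hN ih =>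
    rw [EE_succ hN]
    rw [← ih]
    apply EE_congr hβ hN
    intro w hw
    rw [ih, ← Finset.sum_mul, hw.sum_div hβ hN, one_mul]

/-! ### functionals -/

noncomputable def asc (k : ℕ) (x : ℝ) : ℝ := (ascPochhammer ℝ k).eval x

lemma asc_step (k : ℕ) (x : ℝ) : x * asc k (x + 1) = (x + k) * asc k x := by
  unfold asc
  have h1 : (ascPochhammer ℝ (k + 1)).eval x = x * (ascPochhammer ℝ k).eval (x + 1) := by
    rw [ascPochhammer_succ_left]; simp
  have h2 : (ascPochhammer ℝ (k + 1)).eval x = (ascPochhammer ℝ k).eval x * (x + k) := by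
    rw [ascPochhammer_succ_right]; simp
  rw [← h1, h2]; ring

lemma pow_le_asc (k : ℕ) (x : ℝ) (hx : 0 ≤ x) : x ^ k ≤ asc k x := by
  induction k with
  | zero => simp [asc]
  | succ k ih =>
    unfold asc at ih ⊢
    rw [ascPochhammer_succ_right, pow_succ]
    simp only [Polynomial.eval_mul, Polynomial.eval_add, Polynomial.eval_X,
      Polynomial.eval_natCast]
    have : (0 : ℝ) ≤ k := Nat.cast_nonneg k
    have h0 : 0 ≤ x ^ k := by positivity
    apply mul_le_mul ih (by linarith) hx (h0.trans ih)

noncomputable def Phi (k N : ℕ) (w : ℕ → ℝ) : ℝ := ∑ i ∈ Finset.Icc 1 N, asc k (w i)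

lemma asc_nonneg (k : ℕ) (x : ℝ) (hx : 0 ≤ x) : 0 ≤ asc k x :=
  (pow_nonneg hx k).trans (pow_le_asc k x hx)

lemma Phi_upd (k N : ℕ) (β : ℝ) (w : ℕ → ℝ) (p : ℕ) (hp : p ∈ Finset.Icc 1 N) :
    Phi k (N + 1) (upd N β w p)
      = Phi k N w + (asc k (w p + 1) - asc k (w p)) + asc k (1 + β) := by
  unfold Phi
  rw [Finset.sum_Icc_succ_top (by omega)]
  congr 1
  · rw [← Finset.add_sum_erase _ _ hp, ← Finset.add_sum_erase _ (fun i => asc k (w i)) hp]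
    have hpN := (Finset.mem_Icc.1 hp).2
    have e1 : upd N β w p p = w p + 1 := by
      unfold upd; rw [if_neg (by omega), if_pos rfl]
    have e2 : ∑ x ∈ (Finset.Icc 1 N).erase p, asc k (upd N β w p x)
        = ∑ x ∈ (Finset.Icc 1 N).erase p, asc k (w x) := by
      apply Finset.sum_congr rfl
      intro x hx
      have hx1 := Finset.ne_of_mem_erase hx
      have hx2 := (Finset.mem_Icc.1 (Finset.mem_of_mem_erase hx)).2
      unfold upd; rw [if_neg (by omega), if_neg hx1, add_zero]
    rw [e1, e2]; ring
  · unfold upd; rw [if_pos rfl]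

lemma Phi_mean {β : ℝ} (hβ : 0 < β) (k : ℕ) {N : ℕ} (hN : 1 ≤ N) (w : ℕ → ℝ) (hw : Good β N w) :
    ∑ p ∈ Finset.Icc 1 N, w p / WW β N * Phi k (N + 1) (upd N β w p)
      = (1 + k / WW β N) * Phi k N w + asc k (1 + β) := by
  have hW := WW_pos hβ hN
  have h1 : ∀ p ∈ Finset.Icc 1 N, w p / WW β N * Phi k (N + 1) (upd N β w p)
      = w p / WW β N * (Phi k N w + asc k (1 + β)) + k / WW β N * asc k (w p) := by
    intro p hp
    rw [Phi_upd k N β w p hp]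
    have := asc_step k (w p)
    have h2 : w p / WW β N * (asc k (w p + 1) - asc k (w p)) = k / WW β N * asc k (w p) := by
      field_simp
      linarith
    linear_combination h2
  rw [Finset.sum_congr rfl h1, Finset.sum_add_distrib, ← Finset.sum_mul, hw.sum_div hβ hN,
    ← Finset.mul_sum]
  unfold Phi
  ring

lemma ev_W {β : ℝ} (hβ : 0 < β) (c a : ℝ) (h : c / (2 + β) < a) :
    ∀ᶠ N : ℕ in Filter.atTop, c / WW β N ≤ a / N := by
  have h' : c < a * (2 + β) := by rwa [div_lt_iff₀ (by linarith)] at h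
  obtain ⟨N1, hN1⟩ := exists_nat_gt (2 * a / (a * (2 + β) - c))
  filter_upwards [Filter.eventually_ge_atTop (max N1 1)] with N hN
  have hN1' : 1 ≤ N := (le_max_right _ _).trans hN
  have hW := WW_pos hβ hN1'
  have hNpos : (0 : ℝ) < N := by exact_mod_cast hN1'
  have g : 2 * a / (a * (2 + β) - c) < N :=
    hN1.trans_le (by exact_mod_cast (le_max_left _ _).trans hN)
  rw [div_lt_iff₀ (by linarith)] at g
  rw [div_le_div_iff₀ hW hNpos]
  unfold WW
  nlinarith

lemma Phi_bound {β : ℝ} (hβ : 0 < β) (k : ℕ) (b : ℝ) (hb : 1 ≤ b) (hkb : k / (2 + β) < b) :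
    ∃ C : ℝ, 0 < C ∧ ∀ N : ℕ, 1 ≤ N → EE β N (Phi k N) ≤ C * (N : ℝ) ^ b := by
  have hk0 : (0 : ℝ) ≤ k / (2 + β) := by positivity
  obtain ⟨a, ha1, ha2⟩ := exists_between hkb
  refine rec_bound (fun N => EE β N (Phi k N)) (fun N => 1 + k / WW β N) a b
    (asc k (1 + β)) ha2 hb (by linarith) ?_ ?_ ?_
  · intro N hN
    have : EE β N (fun _ => 0) ≤ EE β N (Phi k N) := by
      apply EE_mono hβ hN
      intro w hw
      exact Finset.sum_nonneg fun i _ => asc_nonneg k _ (hw.1 i)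
    rwa [EE_const hβ hN] at this
  · filter_upwards [ev_W hβ k a ha1] with N hN
    have := Real.add_one_le_exp (k / WW β N)
    have := Real.exp_le_exp.2 hN
    linarith
  · intro N hN
    rw [EE_succ hN, EE_congr hβ hN (Phi_mean hβ k hN), EE_add, EE_smul, EE_const hβ hN]
    have h1 : (1 : ℝ) ≤ (N : ℝ) ^ (b - 1) :=
      Real.one_le_rpow (by exact_mod_cast hN) (by linarith)
    have h2 : 0 ≤ asc k (1 + β) := asc_nonneg _ _ (by linarith)
    nlinarith

/-! ### block functionals -/

noncomputable def bw (m N : ℕ) (w : ℕ → ℝ) (a : ℕ) : ℝ :=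
  ∑ j ∈ Finset.Icc 1 N, if blk m j = a then w j else 0

noncomputable def SS (m N : ℕ) (w : ℕ → ℝ) : ℝ := ∑ a ∈ Finset.Icc 1 N, (bw m N w a) ^ 2

lemma bw_upd (m N : ℕ) (β : ℝ) (w : ℕ → ℝ) (p : ℕ) (hp : p ∈ Finset.Icc 1 N) (a : ℕ) :
    bw m (N + 1) (upd N β w p) a = bw m N w a + (if blk m p = a then 1 else 0)
      + (if blk m (N + 1) = a then 1 + β else 0) := by
  unfold bw
  rw [Finset.sum_Icc_succ_top (by omega)]
  congr 1
  · have h : ∀ j ∈ Finset.Icc 1 N, (if blk m j = a then upd N β w p j else 0)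
        = (if blk m j = a then w j else 0) + (if j = p then (if blk m p = a then 1 else 0) else 0) := by
      intro j hj
      have hj2 := (Finset.mem_Icc.1 hj).2
      have e : upd N β w p j = w j + if j = p then 1 else 0 := by
        unfold upd; rw [if_neg (by omega)]
      rw [e]
      by_cases hjp : j = p
      · subst hjp; by_cases hb : blk m j = a <;> simp [hb]
      · simp [hjp]
    rw [Finset.sum_congr rfl h, Finset.sum_add_distrib, Finset.sum_ite_eq', if_pos hp]
  · unfold upd; rw [if_pos rfl]

lemma blk_mem (m N j : ℕ) (hj : j ∈ Finset.Icc 1 N) : blk m j ∈ Finset.Icc 1 N := by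
  rw [Finset.mem_Icc] at hj ⊢
  unfold blk
  have := Nat.div_le_self (j - 1) m
  generalize (j - 1) / m = d at *
  omega

lemma bw_zero (m N : ℕ) (w : ℕ → ℝ) (a : ℕ) (ha : ∀ j ∈ Finset.Icc 1 N, blk m j ≠ a) :
    bw m N w a = 0 := by
  unfold bw
  exact Finset.sum_eq_zero fun j hj => if_neg (ha j hj)

lemma SS_upd (m N : ℕ) (β : ℝ) (w : ℕ → ℝ) (p : ℕ) (hp : p ∈ Finset.Icc 1 N) :
    SS m (N + 1) (upd N β w p) = SS m N w + 2 * bw m N w (blk m p) + 1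
      + 2 * (1 + β) * (bw m N w (blk m (N + 1)) + if blk m p = blk m (N + 1) then 1 else 0)
      + (1 + β) ^ 2 := by
  have h0 : SS m N w = ∑ a ∈ Finset.Icc 1 (N + 1), (bw m N w a) ^ 2 := by
    rw [Finset.sum_Icc_succ_top (by omega), bw_zero m N w (N + 1)]
    · simp [SS]
    · intro j hj
      have := Finset.mem_Icc.1 (blk_mem m N j hj)
      omega
  have hp' : blk m p ∈ Finset.Icc 1 (N + 1) := blk_mem _ _ _ (by
    rw [Finset.mem_Icc] at hp ⊢; omega)
  have hb' : blk m (N + 1) ∈ Finset.Icc 1 (N + 1) := blk_mem _ _ _ (by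
    rw [Finset.mem_Icc]; omega)
  rw [h0]
  unfold SS
  have h : ∀ a ∈ Finset.Icc 1 (N + 1), (bw m (N + 1) (upd N β w p) a) ^ 2
      = (bw m N w a) ^ 2 + (if blk m p = a then 2 * bw m N w a + 1 else 0)
        + (if blk m (N + 1) = a then 2 * (1 + β) * (bw m N w a + if blk m p = a then 1 else 0)
          + (1 + β) ^ 2 else 0) := by
    intro a _
    rw [bw_upd m N β w p hp]
    split_ifs <;> ring
  rw [Finset.sum_congr rfl h, Finset.sum_add_distrib, Finset.sum_add_distrib,
    Finset.sum_ite_eq, Finset.sum_ite_eq, if_pos hp', if_pos hb']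
  ring

lemma sum_w_bw (m N : ℕ) (w : ℕ → ℝ) :
    ∑ p ∈ Finset.Icc 1 N, w p * bw m N w (blk m p) = SS m N w := by
  unfold SS
  have h : ∀ a ∈ Finset.Icc 1 N, (bw m N w a) ^ 2
      = ∑ p ∈ Finset.Icc 1 N, if blk m p = a then w p * bw m N w a else 0 := by
    intro a _
    rw [sq]
    nth_rewrite 1 [bw]
    rw [Finset.sum_mul]
    exact Finset.sum_congr rfl fun p _ => by split_ifs <;> simp
  rw [Finset.sum_congr rfl h, Finset.sum_comm]
  apply Finset.sum_congr rfl
  intro p hp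
  rw [Finset.sum_ite_eq, if_pos (blk_mem m N p hp)]

noncomputable def cc (β : ℝ) : ℕ → ℕ → ℝ
  | 0, _ => 0
  | r + 1, N => (2 * (1 + β) + cc β r (N + 1)) * ((1 + 1 / WW β N) / (1 + 2 / WW β N))

lemma cc_bound {β : ℝ} (hβ : 0 < β) (r : ℕ) : ∀ N, 1 ≤ N →
    0 ≤ cc β r N ∧ cc β r N ≤ 2 * (1 + β) * r := by
  induction r with
  | zero => intro N _; simp [cc]
  | succ r ih =>
    intro N hN
    have hW := WW_pos hβ hN
    obtain ⟨h1, h2⟩ := ih (N + 1) (by omega)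
    have hq0 : 0 ≤ (1 + 1 / WW β N) / (1 + 2 / WW β N) := by positivity
    have hq1 : (1 + 1 / WW β N) / (1 + 2 / WW β N) ≤ 1 := by
      rw [div_le_one (by positivity)]
      gcongr
      norm_num
    simp only [cc]
    constructor
    · positivity
    · calc _ ≤ (2 * (1 + β) + cc β r (N + 1)) * 1 := by gcongr
        _ ≤ _ := by push_cast; linarith

noncomputable def cN (β : ℝ) (m N : ℕ) : ℝ := cc β (m - N % m) N
noncomputable def cP (β : ℝ) (m N : ℕ) : ℝ := cc β (m - N % m - 1) (N + 1)

lemma cN_rel {β : ℝ} (hβ : 0 < β) {m : ℕ} (hm : 1 ≤ m) {N : ℕ} (hN : 1 ≤ N) :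
    cN β m N * (1 + 2 / WW β N) = (2 * (1 + β) + cP β m N) * (1 + 1 / WW β N) := by
  have hW := WW_pos hβ hN
  unfold cN cP
  have := Nat.mod_lt N hm
  obtain ⟨r, hr⟩ : ∃ r, m - N % m = r + 1 := ⟨m - N % m - 1, by omega⟩
  rw [hr, Nat.add_sub_cancel, cc]
  have : 0 < 1 + 2 / WW β N := by positivity
  field_simp

noncomputable def TT (β : ℝ) (m N : ℕ) (w : ℕ → ℝ) : ℝ :=
  SS m N w + cN β m N * bw m N w (blk m (N + 1))

lemma corr_upd (β : ℝ) {m : ℕ} (hm : 1 ≤ m) (N : ℕ) (w : ℕ → ℝ) :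
    cN β m (N + 1) * bw m (N + 1) w (blk m (N + 2))
      = cP β m N * bw m (N + 1) w (blk m (N + 1)) := by
  have hlt := Nat.mod_lt N hm
  have e := Nat.div_add_mod N m
  by_cases h : N % m + 1 = m
  · have h1 : cP β m N = 0 := by
      unfold cP
      rw [show m - N % m - 1 = 0 by omega, cc]
    have h2 : (N + 1) / m = N / m + 1 := by
      rw [Nat.div_eq_iff (by omega)]
      constructor
      · rw [Nat.add_mul, Nat.mul_comm]; omega
      · rw [Nat.add_mul, Nat.mul_comm]; omega
    rw [h1, bw_zero]
    · ring
    · intro j hj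
      have hj2 := (Finset.mem_Icc.1 hj).2
      unfold blk
      have : (j - 1) / m ≤ N / m := Nat.div_le_div_right (by omega)
      rw [show N + 2 - 1 = N + 1 by omega]
      omega
  · have h2 : (N + 1) / m = N / m := by
      rw [Nat.div_eq_iff (by omega)]
      constructor
      · rw [Nat.mul_comm]; omega
      · rw [Nat.mul_comm]; omega
    have h3 : (N + 1) % m = N % m + 1 := by
      have := Nat.div_add_mod (N + 1) m
      rw [h2] at this
      omega
    have h4 : blk m (N + 2) = blk m (N + 1) := by
      unfold blk
      rw [show N + 2 - 1 = N + 1 by omega, show N + 1 - 1 = N by omega, h2]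
    unfold cN cP
    rw [h3, h4, Nat.sub_sub]

noncomputable def ZZ (β : ℝ) (m N : ℕ) (w : ℕ → ℝ) (p : ℕ) : ℝ :=
  2 * bw m N w (blk m p)
    + (2 * (1 + β) + cP β m N) * (if blk m p = blk m (N + 1) then 1 else 0)

noncomputable def Zbar (β : ℝ) (m N : ℕ) (w : ℕ → ℝ) : ℝ :=
  ∑ p ∈ Finset.Icc 1 N, w p / WW β N * ZZ β m N w p

noncomputable def det (β : ℝ) (m N : ℕ) : ℝ := 1 + (1 + β) ^ 2 + cP β m N * (1 + β)

lemma Zbar_eq (β : ℝ) (m N : ℕ) (w : ℕ → ℝ) : Zbar β m N w =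
    (2 * SS m N w + (2 * (1 + β) + cP β m N) * bw m N w (blk m (N + 1))) / WW β N := by
  unfold Zbar
  rw [← sum_w_bw]
  have hbw : bw m N w (blk m (N + 1)) =
    ∑ j ∈ Finset.Icc 1 N, if blk m j = blk m (N + 1) then w j else 0 := rfl
  rw [hbw]
  rw [Finset.mul_sum, Finset.mul_sum, ← Finset.sum_add_distrib, Finset.sum_div]
  apply Finset.sum_congr rfl
  intro p _
  unfold ZZ
  split_ifs <;> ring

lemma TT_upd {β : ℝ} (hβ : 0 < β) {m : ℕ} (hm : 1 ≤ m) {N : ℕ} (hN : 1 ≤ N) (w : ℕ → ℝ)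
    (p : ℕ) (hp : p ∈ Finset.Icc 1 N) :
    TT β m (N + 1) (upd N β w p) = (1 + 2 / WW β N) * TT β m N w + det β m N
      + (ZZ β m N w p - Zbar β m N w) := by
  have hW := WW_pos hβ hN
  have hrel := cN_rel hβ hm hN
  rw [Zbar_eq]
  unfold TT
  rw [show N + 1 + 1 = N + 2 by ring, corr_upd β hm, SS_upd m N β w p hp, bw_upd m N β w p hp,
    if_pos rfl]
  unfold ZZ det
  linear_combination (-bw m N w (blk m (N + 1))) * hrel

lemma card_blk_le {m : ℕ} (hm : 1 ≤ m) (N a : ℕ) :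
    ((Finset.Icc 1 N).filter (fun j => blk m j = a)).card ≤ m := by
  have : (Finset.Icc 1 N).filter (fun j => blk m j = a)
      ⊆ Finset.Icc ((a - 1) * m + 1) ((a - 1) * m + m) := by
    intro j hj
    rw [Finset.mem_filter, Finset.mem_Icc] at hj
    obtain ⟨hj, hb⟩ := hj
    unfold blk at hb
    have h1 : (j - 1) / m = a - 1 := by
      generalize (j - 1) / m = d at *
      omega
    rw [Nat.div_eq_iff (by omega)] at h1
    rw [Finset.mem_Icc]
    omega
  refine (Finset.card_le_card this).trans ?_
  rw [Nat.card_Icc]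
  omega

lemma bw_le {m : ℕ} (hm : 1 ≤ m) (N : ℕ) (w : ℕ → ℝ) (r : ℝ) (hr : 0 ≤ r)
    (h : ∀ j ∈ Finset.Icc 1 N, w j ≤ r) (a : ℕ) : bw m N w a ≤ m * r := by
  unfold bw
  rw [← Finset.sum_filter]
  calc _ ≤ ∑ j ∈ (Finset.Icc 1 N).filter (fun j => blk m j = a), r :=
        Finset.sum_le_sum fun j hj => h j (Finset.mem_filter.1 hj).1
    _ = ((Finset.Icc 1 N).filter (fun j => blk m j = a)).card * r := by simp
    _ ≤ _ := by
      gcongr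
      exact_mod_cast card_blk_le hm N a

lemma bw_nonneg {β : ℝ} (m N : ℕ) (w : ℕ → ℝ) (hw : Good β N w) (a : ℕ) : 0 ≤ bw m N w a := by
  unfold bw
  apply Finset.sum_nonneg
  intro j _
  split_ifs
  · exact hw.1 j
  · exact le_rfl

lemma Y_bound {β : ℝ} (hβ : 0 < β) {m : ℕ} (hm : 1 ≤ m) (n : ℕ) :
    ∃ C : ℝ, 0 < C ∧ ∀ N : ℕ, 1 ≤ N → ∀ w, Good β N w → ∀ p ∈ Finset.Icc 1 N,
      (ZZ β m N w p - Zbar β m N w) ^ (2 * n + 2) ≤ C * (Phi (2 * n + 2) N w + 1) := by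
  set Q : ℝ := 2 * (1 + β) + 2 * (1 + β) * m with hQ
  have hQ0 : 0 ≤ Q := by positivity
  refine ⟨2 ^ (2 * n + 1) * ((2 * m) ^ (2 * n + 2) + Q ^ (2 * n + 2)), by positivity, ?_⟩
  intro N hN w hw p hp
  obtain ⟨j, hj, hmax⟩ := Finset.exists_max_image (Finset.Icc 1 N) w ⟨1, by simp [hN]⟩
  have hW := WW_pos hβ hN
  have hcP : 0 ≤ cP β m N ∧ cP β m N ≤ 2 * (1 + β) * m := by
    obtain ⟨h1, h2⟩ := cc_bound hβ (m - N % m - 1) (N + 1) (by omega)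
    refine ⟨h1, h2.trans ?_⟩
    gcongr
    omega
  have hZ : ∀ p ∈ Finset.Icc 1 N, 0 ≤ ZZ β m N w p ∧ ZZ β m N w p ≤ 2 * m * w j + Q := by
    intro p _
    have b1 := bw_nonneg m N w hw (blk m p)
    have b2 := bw_le hm N w (w j) (hw.1 j) hmax (blk m p)
    unfold ZZ
    split_ifs
    · constructor
      · nlinarith
      · rw [hQ]; linarith
    · constructor <;> linarith
  have hZb : 0 ≤ Zbar β m N w ∧ Zbar β m N w ≤ 2 * m * w j + Q := by
    unfold Zbar
    constructor
    · exact Finset.sum_nonneg fun p hp => mul_nonneg (div_nonneg (hw.1 p) hW.le) (hZ p hp).1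
    · calc _ ≤ ∑ p ∈ Finset.Icc 1 N, w p / WW β N * (2 * m * w j + Q) :=
            Finset.sum_le_sum fun p hp =>
              mul_le_mul_of_nonneg_left (hZ p hp).2 (div_nonneg (hw.1 p) hW.le)
        _ = _ := by rw [← Finset.sum_mul, hw.sum_div hβ hN, one_mul]
  have hY : |ZZ β m N w p - Zbar β m N w| ≤ 2 * m * w j + Q := by
    have := hZ p hp
    rw [abs_le]; constructor <;> linarith
  have hev : Even (2 * n + 2) := ⟨n + 1, by ring⟩
  have hPhi : (w j) ^ (2 * n + 2) ≤ Phi (2 * n + 2) N w := by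
    refine (pow_le_asc _ _ (hw.1 j)).trans ?_
    unfold Phi
    exact Finset.single_le_sum (f := fun i => asc (2 * n + 2) (w i))
      (fun i _ => asc_nonneg _ _ (hw.1 i)) hj
  have hPhi0 : 0 ≤ Phi (2 * n + 2) N w := (pow_nonneg (hw.1 j) _).trans hPhi
  have hwj := hw.1 j
  calc _ = |ZZ β m N w p - Zbar β m N w| ^ (2 * n + 2) := (hev.pow_abs _).symm
    _ ≤ (2 * m * w j + Q) ^ (2 * n + 2) := by gcongr
    _ ≤ 2 ^ (2 * n + 2 - 1) * ((2 * m * w j) ^ (2 * n + 2) + Q ^ (2 * n + 2)) :=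
        add_pow_le (by positivity) hQ0 _
    _ = 2 ^ (2 * n + 1) * ((2 * m) ^ (2 * n + 2) * (w j) ^ (2 * n + 2) + Q ^ (2 * n + 2)) := by
        rw [mul_pow (2 * (m:ℝ)) (w j)]; rfl
    _ ≤ 2 ^ (2 * n + 1) * ((2 * m) ^ (2 * n + 2) * Phi (2 * n + 2) N w + Q ^ (2 * n + 2)) := by
        gcongr
    _ ≤ _ := by
        rw [mul_assoc]
        gcongr
        have h1 : 0 ≤ (2 * (m:ℝ)) ^ (2 * n + 2) := by positivity
        have h2 : 0 ≤ Q ^ (2 * n + 2) := by positivity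
        nlinarith [mul_nonneg h2 hPhi0]

lemma sum_Y {β : ℝ} (hβ : 0 < β) (m : ℕ) {N : ℕ} (hN : 1 ≤ N) (w : ℕ → ℝ) (hw : Good β N w) :
    ∑ p ∈ Finset.Icc 1 N, w p / WW β N * (ZZ β m N w p - Zbar β m N w) = 0 := by
  simp_rw [mul_sub]
  rw [Finset.sum_sub_distrib, ← Finset.sum_mul, hw.sum_div hβ hN]
  unfold Zbar
  ring

lemma ETT_succ {β : ℝ} (hβ : 0 < β) {m : ℕ} (hm : 1 ≤ m) {N : ℕ} (hN : 1 ≤ N) :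
    EE β (N + 1) (TT β m (N + 1)) = (1 + 2 / WW β N) * EE β N (TT β m N) + det β m N := by
  rw [EE_succ hN, ← EE_smul]
  rw [← EE_const hβ hN (det β m N)]
  rw [← EE_add]
  apply EE_congr hβ hN
  intro w hw
  rw [Finset.sum_congr rfl (fun p hp => by rw [TT_upd hβ hm hN w p hp])]
  simp_rw [mul_add _ (_ + _ : ℝ) (_ - _ : ℝ)]
  rw [Finset.sum_add_distrib, sum_Y hβ m hN w hw, ← Finset.sum_mul, hw.sum_div hβ hN]
  ring

noncomputable def XX (β : ℝ) (m N : ℕ) (w : ℕ → ℝ) : ℝ := TT β m N w - EE β N (TT β m N)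

lemma XX_upd {β : ℝ} (hβ : 0 < β) {m : ℕ} (hm : 1 ≤ m) {N : ℕ} (hN : 1 ≤ N) (w : ℕ → ℝ)
    (p : ℕ) (hp : p ∈ Finset.Icc 1 N) :
    XX β m (N + 1) (upd N β w p) = (1 + 2 / WW β N) * XX β m N w
      + (ZZ β m N w p - Zbar β m N w) := by
  unfold XX
  rw [ETT_succ hβ hm hN, TT_upd hβ hm hN w p hp]
  ring

lemma XX_moment {β : ℝ} (hβ : 0 < β) {m : ℕ} (hm : 1 ≤ m) (n : ℕ) (b : ℝ) (hb : 1 ≤ b)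
    (hnb : (2 * n + 2) / (2 + β) < b) :
    ∃ C : ℝ, 0 < C ∧ ∀ N : ℕ, 1 ≤ N →
      EE β N (fun w => (XX β m N w) ^ (2 * n + 2)) ≤ C * (N : ℝ) ^ ((n : ℝ) + 1 + b) := by
  obtain ⟨K, hK, hpow⟩ := pow_ineq n
  obtain ⟨C1, hC1, hY⟩ := Y_bound hβ hm n
  obtain ⟨C2, hC2, hPhi⟩ := Phi_bound hβ (2 * n + 2) b hb (by push_cast; exact hnb)
  have hn0 : (0 : ℝ) ≤ n := Nat.cast_nonneg n
  set gap : ℝ := (n + 1) * β / (2 + β) with hgap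
  have hgap0 : 0 < gap := by positivity
  set δ0 : ℝ := min 1 (gap / (2 * K)) with hδ0
  have hδpos : 0 < δ0 := lt_min one_pos (by positivity)
  have hδ1 : δ0 ≤ 1 := min_le_left _ _
  have hKδ : K * δ0 ≤ gap / 2 := by
    have : δ0 ≤ gap / (2 * K) := min_le_right _ _
    calc K * δ0 ≤ K * (gap / (2 * K)) := by gcongr
      _ = gap / 2 := by field_simp
  set a1 : ℝ := (2 * (2 * n + 2)) / (2 + β) + gap / 2 with ha1
  have hkey : (2 * (2 * n + 2)) / (2 + β) + gap = (n : ℝ) + 1 + (2 * n + 2) / (2 + β) := by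
    rw [hgap]; field_simp; ring
  have hev : Even (2 * n + 2) := ⟨n + 1, by ring⟩
  refine rec_bound (fun N => EE β N (fun w => (XX β m N w) ^ (2 * n + 2)))
    (fun N => (1 + K * (δ0 / N)) * (1 + 2 / WW β N) ^ (2 * n + 2)) (gap / 2 + a1)
    ((n : ℝ) + 1 + b) (K * (δ0⁻¹) ^ n * C1 * (C2 + 1)) ?_ (by linarith) ?_ ?_ ?_ ?_
  · rw [ha1]; linarith
  · positivity
  · intro N hN
    have : EE β N (fun _ => 0) ≤ EE β N (fun w => (XX β m N w) ^ (2 * n + 2)) := by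
      apply EE_mono hβ hN
      intro w hw
      exact hev.pow_nonneg _
    rwa [EE_const hβ hN] at this
  · filter_upwards [ev_W hβ (2 * (2 * n + 2)) a1 (by rw [ha1]; linarith),
      Filter.eventually_ge_atTop 1] with N hN hN1
    have hW := WW_pos hβ hN1
    have hNpos : (0 : ℝ) < N := by exact_mod_cast hN1
    have e1 : 1 + K * (δ0 / N) ≤ Real.exp (gap / 2 / N) := by
      have h1 := Real.add_one_le_exp (gap / 2 / N)
      have h2 : K * (δ0 / N) ≤ gap / 2 / N := by
        rw [← mul_div_assoc]; gcongr
      linarith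
    have e2 : (1 + 2 / WW β N) ^ (2 * n + 2) ≤ Real.exp (a1 / N) := by
      have h1 := Real.add_one_le_exp (2 / WW β N)
      calc _ ≤ (Real.exp (2 / WW β N)) ^ (2 * n + 2) := by
            gcongr; linarith
        _ = Real.exp ((2 * (2 * n + 2)) / WW β N) := by
            rw [← Real.exp_nat_mul]; congr 1; push_cast; ring
        _ ≤ _ := Real.exp_le_exp.2 hN
    calc _ ≤ Real.exp (gap / 2 / N) * Real.exp (a1 / N) := by gcongr
      _ = _ := by rw [← Real.exp_add]; congr 1; ring
  · intro N hN
    have hW := WW_pos hβ hN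
    have hNpos : (0 : ℝ) < N := by exact_mod_cast hN
    have hN1 : (1 : ℝ) ≤ N := by exact_mod_cast hN
    set r : ℝ := 1 + 2 / WW β N with hr
    set δ : ℝ := δ0 / N with hδ
    have hδp : 0 < δ := by positivity
    have hδ1' : δ ≤ 1 := by
      rw [hδ, div_le_one hNpos]; linarith
    have step : ∀ w, Good β N w →
        ∑ p ∈ Finset.Icc 1 N, w p / WW β N * (XX β m (N + 1) (upd N β w p)) ^ (2 * n + 2)
          ≤ (1 + K * δ) * r ^ (2 * n + 2) * (XX β m N w) ^ (2 * n + 2)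
            + K * (δ⁻¹) ^ n * C1 * (Phi (2 * n + 2) N w + 1) := by
      intro w hw
      set x := r * XX β m N w with hx
      calc _ ≤ ∑ p ∈ Finset.Icc 1 N, (w p / WW β N * (x ^ (2 * n + 2) +
              K * (δ * x ^ (2 * n + 2) + (δ⁻¹) ^ n * (C1 * (Phi (2 * n + 2) N w + 1))))
              + (2 * n + 2) * x ^ (2 * n + 1) *
                (w p / WW β N * (ZZ β m N w p - Zbar β m N w))) := by
            apply Finset.sum_le_sum
            intro p hp
            rw [XX_upd hβ hm hN w p hp]
            have h1 := hpow x (ZZ β m N w p - Zbar β m N w) δ hδp hδ1'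
            have h2 := hY N hN w hw p hp
            have h3 : 0 ≤ w p / WW β N := div_nonneg (hw.1 p) hW.le
            have h4 : (x + (ZZ β m N w p - Zbar β m N w)) ^ (2 * n + 2) ≤
              (x ^ (2 * n + 2) + K * (δ * x ^ (2 * n + 2)
                + (δ⁻¹) ^ n * (C1 * (Phi (2 * n + 2) N w + 1))))
                + (2 * n + 2) * x ^ (2 * n + 1) * (ZZ β m N w p - Zbar β m N w) := by
              have : K * (δ * x ^ (2 * n + 2) + (δ⁻¹) ^ n *
                  (ZZ β m N w p - Zbar β m N w) ^ (2 * n + 2)) ≤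
                K * (δ * x ^ (2 * n + 2)
                + (δ⁻¹) ^ n * (C1 * (Phi (2 * n + 2) N w + 1))) := by gcongr
              linarith
            have := mul_le_mul_of_nonneg_left h4 h3
            linarith
        _ = _ := by
            rw [Finset.sum_add_distrib, ← Finset.mul_sum, sum_Y hβ m hN w hw, ← Finset.sum_mul,
              hw.sum_div hβ hN, hx, mul_pow]
            ring
    rw [EE_succ hN]
    refine (EE_mono hβ hN step).trans ?_
    rw [EE_add, EE_smul, EE_smul, EE_add, EE_const hβ hN]
    have hb1 : (1 : ℝ) ≤ (N : ℝ) ^ b := Real.one_le_rpow hN1 (by linarith)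
    have hPhiN := hPhi N hN
    have e1 : (δ⁻¹) ^ n = (δ0⁻¹) ^ n * (N : ℝ) ^ n := by
      rw [hδ, ← mul_pow]; congr 1; field_simp
    have e2 : (N : ℝ) ^ ((n : ℝ) + 1 + b - 1) = (N : ℝ) ^ n * (N : ℝ) ^ b := by
      rw [show (n : ℝ) + 1 + b - 1 = n + b by ring, Real.rpow_add hNpos, Real.rpow_natCast]
    rw [e1, e2]
    have : K * ((δ0⁻¹) ^ n * (N : ℝ) ^ n) * C1 * (EE β N (Phi (2 * n + 2) N) + 1)
        ≤ K * ((δ0⁻¹) ^ n * (N : ℝ) ^ n) * C1 * ((C2 + 1) * (N : ℝ) ^ b) := by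
      gcongr
      linarith
    calc _ ≤ _ := add_le_add_right this _
      _ = _ := by ring

/-! ### relation with the degrees -/

lemma blk_le_n {n m : ℕ} (hm : 1 ≤ m) (j : ℕ) (hj : j ∈ Finset.Icc 1 (n * m)) :
    blk m j ∈ Finset.Icc 1 n := by
  rw [Finset.mem_Icc] at hj ⊢
  unfold blk
  have : (j - 1) / m < n := by
    rw [Nat.div_lt_iff_lt_mul (by omega)]
    omega
  generalize (j - 1) / m = d at *
  omega

lemma card_blk {n m : ℕ} (hm : 1 ≤ m) (a : ℕ) (ha : a ∈ Finset.Icc 1 n) :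
    ((Finset.Icc 1 (n * m)).filter (fun j => blk m j = a)).card = m := by
  rw [Finset.mem_Icc] at ha
  obtain ⟨c, rfl⟩ : ∃ c, a = c + 1 := ⟨a - 1, by omega⟩
  have hcn : (c + 1) * m ≤ n * m := Nat.mul_le_mul_right m ha.2
  have : (Finset.Icc 1 (n * m)).filter (fun j => blk m j = c + 1)
      = Finset.Icc (c * m + 1) (c * m + m) := by
    ext j
    rw [Finset.mem_filter, Finset.mem_Icc, Finset.mem_Icc]
    unfold blk
    rw [Nat.add_right_cancel_iff, Nat.div_eq_iff (by omega)]
    rw [Nat.add_mul] at hcn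
    omega
  rw [this, Nat.card_Icc]
  omega

lemma bw_eq {n m : ℕ} (hm : 1 ≤ m) (β : ℝ) (f : ParentSeq (n * m)) (a : ℕ)
    (ha : a ∈ Finset.Icc 1 n) :
    bw m (n * m) (wt β f) a = (degU n m f a : ℝ) + β * m := by
  unfold bw
  rw [← Finset.sum_filter]
  unfold wt deg
  push_cast
  rw [Finset.sum_add_distrib, Finset.sum_add_distrib, Finset.sum_const, card_blk hm a ha]
  have h1 : ∑ j ∈ (Finset.Icc 1 (n * m)).filter (fun j => blk m j = a),
      (if 2 ≤ j then (1 : ℝ) else 0)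
      = ((Finset.Icc 2 (n * m)).filter (fun t => blk m t = a)).card := by
    rw [← Finset.sum_filter, Finset.sum_const, nsmul_eq_mul, mul_one]
    congr 2
    ext j; simp only [Finset.mem_filter, Finset.mem_Icc]
    constructor
    · rintro ⟨⟨h1, h2⟩, h3⟩; exact ⟨⟨h3, h1.2⟩, h2⟩
    · rintro ⟨h1, h2⟩; exact ⟨⟨⟨by omega, h1.2⟩, h2⟩, h1.1⟩
  have h2 : ((Finset.Icc 2 (n * m)).filter (fun t => blk m (pval f t) = a)).card
      = ∑ j ∈ (Finset.Icc 1 (n * m)).filter (fun j => blk m j = a),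
        ((Finset.Icc 2 (n * m)).filter (fun t => pval f t = j)).card := by
    rw [Finset.card_eq_sum_card_fiberwise (f := fun t => pval f t)
      (t := (Finset.Icc 1 (n * m)).filter (fun j => blk m j = a))]
    · apply Finset.sum_congr rfl
      intro j hj
      congr 1
      ext t
      simp only [Finset.mem_filter] at hj ⊢
      constructor
      · rintro ⟨⟨h1, h2⟩, h3⟩; exact ⟨h1, h3⟩
      · rintro ⟨h1, h3⟩; exact ⟨⟨h1, by rw [h3]; exact hj.2⟩, h3⟩
    · intro t ht
      have ht := Finset.mem_filter.1 (Finset.mem_coe.1 ht)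
      exact Finset.mem_coe.2 (Finset.mem_filter.2 ⟨pval_mem f t ht.1, ht.2⟩)
  rw [h1]
  unfold degU
  rw [h2, nsmul_eq_mul]
  push_cast
  ring

lemma sum_degU {n m : ℕ} (hm : 1 ≤ m) (f : ParentSeq (n * m)) :
    ∑ a ∈ Finset.Icc 1 n, (degU n m f a : ℝ) = 2 * ((Finset.Icc 2 (n * m)).card : ℝ) := by
  have sub : ∀ t ∈ Finset.Icc 2 (n * m), t ∈ Finset.Icc 1 (n * m) := by
    intro t ht
    rw [Finset.mem_Icc] at ht ⊢
    omega
  have h1 := Finset.card_eq_sum_card_fiberwise (s := Finset.Icc 2 (n * m)) (t := Finset.Icc 1 n)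
    (f := fun t => blk m t) (fun t ht => blk_le_n hm t (sub t ht))
  have h2 := Finset.card_eq_sum_card_fiberwise (s := Finset.Icc 2 (n * m)) (t := Finset.Icc 1 n)
    (f := fun t => blk m (pval f t)) (fun t ht => blk_le_n hm _ (pval_mem f t ht))
  unfold degU
  rw [← Nat.cast_sum, Finset.sum_add_distrib, ← h1, ← h2]
  push_cast; ring

lemma D_eq {n m : ℕ} (hm : 1 ≤ m) (β : ℝ) : ∃ κ : ℝ, ∀ f : ParentSeq (n * m),
    ∑ i ∈ Finset.Icc 1 n, (Nat.choose (degU n m f i) 2 : ℝ)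
      = 1 / 2 * TT β m (n * m) (wt β f) + κ := by
  refine ⟨-(1 / 2 * ((1 + 2 * β * m) * (2 * ((Finset.Icc 2 (n * m)).card : ℝ))
    + n * (β * m) ^ 2)), ?_⟩
  intro f
  have h0 : bw m (n * m) (wt β f) (blk m (n * m + 1)) = 0 := by
    apply bw_zero
    intro j hj
    have := Finset.mem_Icc.1 (blk_le_n hm j hj)
    have h : blk m (n * m + 1) = n + 1 := by
      unfold blk
      rw [Nat.add_sub_cancel, Nat.mul_div_cancel _ (by omega)]
    omega
  have hS : SS m (n * m) (wt β f)
      = ∑ a ∈ Finset.Icc 1 n, ((degU n m f a : ℝ) + β * m) ^ 2 := by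
    unfold SS
    rw [← Finset.sum_subset (s₁ := Finset.Icc 1 n)]
    · apply Finset.sum_congr rfl
      intro a ha
      rw [bw_eq hm β f a ha]
    · apply Finset.Icc_subset_Icc le_rfl
      exact Nat.le_mul_of_pos_right n hm
    · intro a _ ha
      rw [bw_zero]
      · norm_num
      · intro j hj he
        exact ha (he ▸ blk_le_n hm j hj)
  unfold TT
  rw [h0, hS]
  have e : ∀ a ∈ Finset.Icc 1 n, (Nat.choose (degU n m f a) 2 : ℝ)
      = 1 / 2 * ((degU n m f a : ℝ) + β * m) ^ 2
        - (1 / 2 * (1 + 2 * β * m)) * (degU n m f a : ℝ) - 1 / 2 * (β * m) ^ 2 := by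
    intro a _
    rw [Nat.cast_choose_two]
    ring
  rw [Finset.sum_congr rfl e, Finset.sum_sub_distrib, Finset.sum_sub_distrib,
    ← Finset.mul_sum, ← Finset.mul_sum, sum_degU hm f, Finset.sum_const,
    show (Finset.Icc 1 n).card = n by simp]
  simp only [nsmul_eq_mul]
  ring

lemma D_dev {n m : ℕ} (hn : 1 ≤ n) (hm : 1 ≤ m) {β : ℝ} (hβ : 0 < β) (f : ParentSeq (n * m)) :
    (∑ i ∈ Finset.Icc 1 n, (Nat.choose (degU n m f i) 2 : ℝ))
      - moriE (n * m) β
          (fun g => ∑ i ∈ Finset.Icc 1 n, (Nat.choose (degU n m g i) 2 : ℝ))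
      = 1 / 2 * XX β m (n * m) (wt β f) := by
  obtain ⟨κ, hκ⟩ := D_eq (n := n) hm β
  simp_rw [hκ]
  have hN : 1 ≤ n * m := Nat.mul_pos hn hm
  have : moriE (n * m) β (fun g => 1 / 2 * TT β m (n * m) (wt β g) + κ)
      = 1 / 2 * EE β (n * m) (TT β m (n * m)) + κ := by
    change EE β (n * m) (fun w => 1 / 2 * TT β m (n * m) w + κ) = _
    rw [EE_add, EE_smul, EE_const hβ hN]
  rw [this]
  unfold XX
  ring

/-- **Theorem 5.5.** For `β > 0`, the number `D = Σ_i binom(d(u_i),2)` of pairs of adjacent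
half-edges of `G^n_{m,β}` is concentrated: for any `ε > 0` and `γ > 0` there is `n*` such
that for all `n ≥ n*`, `Pr(|D − E[D]| ≥ n^{(4+β)/(4+2β)+ε}) ≤ 1/n^γ`. -/
theorem concentration_adjacent_pairs (β : ℝ) (hβ : 0 < β) (m : ℕ) (hm : 1 ≤ m) :
    ∀ ε : ℝ, 0 < ε → ∀ γ : ℝ, 0 < γ → ∃ nstar : ℕ, ∀ n : ℕ, nstar ≤ n →
      moriPr (n * m) β (fun f =>
          (n : ℝ) ^ ((4 + β) / (4 + 2 * β) + ε) ≤
            |(∑ i ∈ Finset.Icc 1 n, (Nat.choose (degU n m f i) 2 : ℝ))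
              - moriE (n * m) β
                  (fun g => ∑ i ∈ Finset.Icc 1 n, (Nat.choose (degU n m g i) 2 : ℝ))|)
        ≤ 1 / (n : ℝ) ^ γ := by
  intro ε hε γ hγ
  obtain ⟨n0, hn0⟩ := exists_nat_gt (max ((γ + 1) / ε) (2 + β))
  have g1 : (γ + 1) / ε < n0 := (le_max_left _ _).trans_lt hn0
  have g2 : 2 + β < n0 := (le_max_right _ _).trans_lt hn0
  set b : ℝ := (2 * n0 + 2) / (2 + β) + (n0 + 1) * ε with hb
  have hn0' : (0 : ℝ) ≤ n0 := Nat.cast_nonneg _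
  have hq : 0 < ((n0 : ℝ) + 1) * ε := by positivity
  have hb1 : 1 ≤ b := by
    have : 1 ≤ (2 * (n0 : ℝ) + 2) / (2 + β) := by
      rw [one_le_div (by linarith)]; linarith
    rw [hb]; linarith
  obtain ⟨C, hC, hmom⟩ := XX_moment hβ hm n0 b hb1 (by rw [hb]; linarith)
  set e : ℝ := (n0 : ℝ) + 1 + b with he
  obtain ⟨n1, hn1⟩ := exists_nat_gt (C * (m : ℝ) ^ e)
  refine ⟨max n1 1, fun n hn => ?_⟩
  have hn1' : 1 ≤ n := (le_max_right _ _).trans hn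
  have hN : 1 ≤ n * m := Nat.mul_pos hn1' hm
  have hnpos : (0 : ℝ) < n := by exact_mod_cast hn1'
  have hn1R : (1 : ℝ) ≤ n := by exact_mod_cast hn1'
  have hCn : C * (m : ℝ) ^ e ≤ n :=
    hn1.le.trans (by exact_mod_cast (le_max_left _ _).trans hn)
  set s : ℝ := (4 + β) / (4 + 2 * β) + ε with hs
  have hTpos : 0 < (n : ℝ) ^ s := Real.rpow_pos_of_pos hnpos _
  have hev : Even (2 * n0 + 2) := ⟨n0 + 1, by ring⟩
  have markov : moriPr (n * m) β (fun f => (n : ℝ) ^ s ≤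
            |(∑ i ∈ Finset.Icc 1 n, (Nat.choose (degU n m f i) 2 : ℝ))
              - moriE (n * m) β
                  (fun g => ∑ i ∈ Finset.Icc 1 n, (Nat.choose (degU n m g i) 2 : ℝ))|)
      ≤ (((n : ℝ) ^ s) ^ (2 * n0 + 2))⁻¹ *
        EE β (n * m) (fun w => (XX β m (n * m) w) ^ (2 * n0 + 2)) := by
    rw [← EE_smul]
    unfold moriPr EE moriE
    apply Finset.sum_le_sum
    intro f _
    have hP := WW_nonneg_step hβ f
    have hdev := D_dev hn1' hm hβ f
    unfold moriE at hdev
    beta_reduce at hdev ⊢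
    rw [hdev]
    have hX := hev.pow_nonneg (XX β m (n * m) (wt β f))
    split_ifs with h
    · have h1 : (n : ℝ) ^ s ≤ |XX β m (n * m) (wt β f)| := by
        rw [abs_mul, abs_of_pos (by norm_num : (0 : ℝ) < 1 / 2)] at h
        linarith [abs_nonneg (XX β m (n * m) (wt β f))]
      have h2 : ((n : ℝ) ^ s) ^ (2 * n0 + 2) ≤ (XX β m (n * m) (wt β f)) ^ (2 * n0 + 2) := by
        rw [← hev.pow_abs (XX β m (n * m) (wt β f))]
        gcongr
      have h3 : 1 ≤ (((n : ℝ) ^ s) ^ (2 * n0 + 2))⁻¹ *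
          (XX β m (n * m) (wt β f)) ^ (2 * n0 + 2) := by
        rw [inv_mul_eq_div, one_le_div (by positivity)]
        exact h2
      exact le_mul_of_one_le_right hP h3
    · positivity
  refine markov.trans ?_
  have hm0 : (0 : ℝ) ≤ m := Nat.cast_nonneg _
  have hexp : s * ((2 * n0 + 2 : ℕ) : ℝ) = e + (n0 + 1) * ε := by
    rw [hs, he, hb]; push_cast
    have : (4 + 2 * β) ≠ 0 := by positivity
    have : (2 + β) ≠ 0 := by positivity
    field_simp
    ring
  have hε' : γ + 1 ≤ (n0 + 1) * ε := by
    rw [div_lt_iff₀ hε] at g1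
    linarith
  calc _ ≤ (((n : ℝ) ^ s) ^ (2 * n0 + 2))⁻¹ * (C * ((n * m : ℕ) : ℝ) ^ e) := by
        gcongr
        exact hmom (n * m) hN
    _ = (C * (m : ℝ) ^ e) * ((n : ℝ) ^ ((n0 + 1) * ε))⁻¹ := by
        rw [← Real.rpow_natCast ((n : ℝ) ^ s), ← Real.rpow_mul hnpos.le, hexp,
          Real.rpow_add hnpos, Nat.cast_mul, Real.mul_rpow hnpos.le hm0]
        have : (n : ℝ) ^ e ≠ 0 := (Real.rpow_pos_of_pos hnpos _).ne'
        field_simp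
    _ ≤ n * ((n : ℝ) ^ (γ + 1))⁻¹ := by
        gcongr
    _ = 1 / (n : ℝ) ^ γ := by
        rw [Real.rpow_add hnpos, Real.rpow_one]
        field_simp
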